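/- Let G be a group, K ≤ H ≤ G and M ≤ H subgroups. Let E ⊆ G be a set of representatives for the left H-action on S = {g ∈ G : gKg⁻¹ ≤ H}, i.e., every g₀ ∈ S lies in Hg for exactly one g ∈ E. Let γ ∈ G satisfy γKγ⁻¹ ≤ M. Then there exists a unique pair (g, Mh) consisting of an element g ∈ E and a right coset Mh with h ∈ H satisfying h(gKg⁻¹)h⁻¹ ≤ M, such that M(hg) = Mγ. The pair is characterized by Hg = Hγ and Mh = Mγg⁻¹. (Equivalently: in the orbit category Or(G), the morphism Mγ : G/K → G/M decomposes uniquely as the morphism (gKg⁻¹)g : G/K → G/(gKg⁻¹) with g ∈ E, followed by a morphism Mh : G/(gKg⁻¹) → G/M coming from the orbit category Or(H).) -/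

import Mathlib

/-!
As `M ≤ H`, the equation `M(hg) = Mγ` with `h ∈ H` forces `Hg = Hγ`, which singles out `g ∈ E`;
cancelling `g` on the right then leaves `Mh = Mγg⁻¹`.
-/

section

variable {G : Type*} [Group G]

/-- The transporter `{g | gKg⁻¹ ⊆ H}`. When `K` is a subgroup, its elements are the representatives
`g` of the morphisms `Hg : G/K → G/H` of the orbit category; any subset `K` is allowed. -/
def conjTransporter (K : Set G) (H : Subgroup G) : Set G :=
  {g | ∀ k ∈ K, g * k * g⁻¹ ∈ H}

theorem conjTransporter_mono_right (K : Set G) {M H : Subgroup G} (hMH : M ≤ H) :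
    conjTransporter K M ⊆ conjTransporter K H :=
  fun _ hg k hk => hMH (hg k hk)

theorem mul_mem_conjTransporter_iff {K : Set G} {M : Subgroup G} {h g : G} :
    h * g ∈ conjTransporter K M ↔ ∀ k ∈ K, h * (g * k * g⁻¹) * h⁻¹ ∈ M := by
  simp only [conjTransporter, Set.mem_ofPred_eq, mul_inv_rev, mul_assoc]

theorem mul_inv_mul_mem_iff {M : Subgroup G} {γ h g : G} :
    γ * (h * g)⁻¹ ∈ M ↔ h * (γ * g⁻¹)⁻¹ ∈ M := by
  rw [← inv_mem_iff]
  simp only [mul_inv_rev, inv_inv, mul_assoc]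

theorem mul_inv_mem_of_mul_inv_mul_mem {H : Subgroup G} {γ h g : G} (hh : h ∈ H)
    (hγ : γ * (h * g)⁻¹ ∈ H) : γ * g⁻¹ ∈ H := by
  rwa [mul_inv_rev, ← mul_assoc, H.mul_mem_cancel_right (H.inv_mem hh)] at hγ

theorem orbit_category_unique_decomposition_general {K : Set G} {H M : Subgroup G} (hMH : M ≤ H)
    {E : Set G} (hE : ∀ g₀ ∈ conjTransporter K H, ∃! g, g ∈ E ∧ g₀ * g⁻¹ ∈ H)
    {γ : G} (hγ : γ ∈ conjTransporter K M) :
    ∃ g h : G,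
      g ∈ E ∧ h ∈ H ∧ (∀ k ∈ K, h * (g * k * g⁻¹) * h⁻¹ ∈ M) ∧
      γ * (h * g)⁻¹ ∈ M ∧ γ * g⁻¹ ∈ H ∧ h * (γ * g⁻¹)⁻¹ ∈ M ∧
      ∀ g' h' : G, g' ∈ E → h' ∈ H → γ * (h' * g')⁻¹ ∈ M → g' = g ∧ h' * h⁻¹ ∈ M := by
  obtain ⟨g, ⟨hgE, hgH⟩, g_unique⟩ := hE γ (conjTransporter_mono_right K hMH hγ)
  have coset_eq : γ * g⁻¹ * (γ * g⁻¹)⁻¹ ∈ M := by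
    rw [mul_inv_cancel]
    exact M.one_mem
  refine ⟨g, γ * g⁻¹, hgE, hgH, mul_mem_conjTransporter_iff.mp ?_,
    mul_inv_mul_mem_iff.mpr coset_eq, hgH, coset_eq, fun g' h' hg' hh' hγ' => ?_⟩
  · rwa [inv_mul_cancel_right]
  · obtain rfl : g' = g :=
      g_unique g' ⟨hg', mul_inv_mem_of_mul_inv_mul_mem hh' (hMH hγ')⟩
    exact ⟨rfl, mul_inv_mul_mem_iff.mp hγ'⟩

end

/-- Unique decomposition of morphisms `Mγ : G/K → G/M` in the orbit category:
given `K ≤ H ≤ G`, `M ≤ H`, a set `E` of representatives for the left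
`H`-action on `S = {g : gKg⁻¹ ≤ H}`, and `γ ∈ G` with `γKγ⁻¹ ≤ M`, there is a
unique pair `(g, Mh)` with `g ∈ E`, `h ∈ H`, `h(gKg⁻¹)h⁻¹ ≤ M` and
`M(hg) = Mγ`; it is characterized by `Hg = Hγ` and `Mh = Mγg⁻¹`. -/
theorem orbit_category_unique_decomposition (G : Type*) [Group G]
    (K H M : Subgroup G) (hKH : K ≤ H) (hMH : M ≤ H) (E : Set G)
    (hE : ∀ g₀ ∈ {g : G | ∀ k ∈ K, g * k * g⁻¹ ∈ H},
      ∃! g, g ∈ E ∧ g₀ * g⁻¹ ∈ H)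
    (hES : E ⊆ {g : G | ∀ k ∈ K, g * k * g⁻¹ ∈ H})
    (γ : G) (hγ : ∀ k ∈ K, γ * k * γ⁻¹ ∈ M) :
    ∃ g h : G,
      -- existence of the decomposition
      g ∈ E ∧ h ∈ H ∧ (∀ k ∈ K, h * (g * k * g⁻¹) * h⁻¹ ∈ M) ∧
      γ * (h * g)⁻¹ ∈ M ∧
      -- its characterization: `Hg = Hγ` and `Mh = Mγg⁻¹`
      γ * g⁻¹ ∈ H ∧ h * (γ * g⁻¹)⁻¹ ∈ M ∧
      -- uniqueness of the pair `(g, Mh)`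
      (∀ g' h' : G, g' ∈ E → h' ∈ H →
        (∀ k ∈ K, h' * (g' * k * g'⁻¹) * h'⁻¹ ∈ M) → γ * (h' * g')⁻¹ ∈ M →
        g' = g ∧ h' * h⁻¹ ∈ M) := by
  obtain ⟨g, h, hg, hh, hconj, hγhg, hHg, hMh, unique⟩ :=
    orbit_category_unique_decomposition_general hMH hE hγ
  exact ⟨g, h, hg, hh, hconj, hγhg, hHg, hMh, fun g' h' hg' hh' _ => unique g' h' hg' hh'⟩
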